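/- Let ℬ ⊆ 𝒜 be a unital *-subalgebra and d ≥ 1. Let s_ii ∈ 𝒜 (1 ≤ i ≤ d) be self-adjoint elements that are standard semicircular in moments, and for each pair i < j let x_ij, y_ij ∈ 𝒜 be self-adjoint, standard semicircular in moments; set s_ij := (x_ij + i·y_ij)/√2 for i < j and s_ji := s_ij* (so each s_ij with i < j is circular of variance 1). Assume the family of sets {s₁₁}, …, {s_dd}, {x_ij} (i < j), {y_ij} (i < j), ℬ is free with respect to φ. Then the self-adjoint matrix S := (s_ij)_{i,j=1}^{d} ∈ M_d(𝒜) is semicircular of variance d in (M_d(𝒜), φ_d), i.e. φ_d(S^{2m}) = d^m · Cₘ and φ_d(S^{2m+1}) = 0 for all m ≥ 0; and moreover {S} and M_d(ℬ) are free with respect to φ_d. (Proposition 5.3, 2°.) -/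

import Mathlib

open scoped BigOperators
open ComplexOrder

noncomputable section

variable {A : Type*} [Ring A] [Algebra ℂ A] [StarRing A] [StarModule ℂ A]

/-- Freeness of a family of subsets of `T` with respect to a state `φ`. -/
def AreFree {T : Type*} [Ring T] [Algebra ℂ T] {ι : Type*} (φ : T → ℂ) (S : ι → Set T) :
    Prop :=
  ∀ (n : ℕ) (t : Fin (n + 1) → ι) (z : Fin (n + 1) → T),
    (∀ m, z m ∈ Algebra.adjoin ℂ (S (t m))) →
    (∀ m, φ (z m) = 0) →
    (∀ m : Fin n, t m.castSucc ≠ t m.succ) →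
    φ ((List.ofFn z).prod) = 0

/-- `s` is standard semicircular in moments with respect to the state `φ`:
`φ(s^{2m}) = Cₘ` and `φ(s^{2m+1}) = 0`. -/
def SemicircMoments {T : Type*} [Monoid T] (φ : T → ℂ) (s : T) : Prop :=
  ∀ m : ℕ, φ (s ^ (2 * m)) = catalan m ∧ φ (s ^ (2 * m + 1)) = 0

/-- `(x + i y)/√2`: the circular element built from `x` and `y`. -/
def circ (x y : A) : A := ((Real.sqrt 2 : ℂ))⁻¹ • (x + Complex.I • y)

/-- The normalized trace `φ_d = tr ⊗ φ` on `M_d(𝒜)`. -/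
def phid {d : ℕ} (φ : A →ₗ[ℂ] ℂ) (X : Matrix (Fin d) (Fin d) A) : ℂ :=
  (∑ i, φ (X i i)) / d

/-!
A standard semicircular family `s`, free from `B`, satisfies the Schwinger–Dyson equations
`f (s j * P) = (f ⊗ f) (∂ⱼ P)` for all noncommutative polynomials `P` in `s` and `B`, where `∂ⱼ` is
the free difference quotient, which annihilates `B`. These equations are linear in the letter
multiplied on the left, so every entry of the matrix `S` satisfies one as well; since the
covariance of the entries is `E[S i j * S p q] = δ (p, q) (j, i)`, the entrywise equations assemble
to the Schwinger–Dyson equation of variance `d` for `S` over `M_d(B)`. For a tracial functional that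
single equation contains the conclusion: on powers of `S` it is the Catalan recursion, and on
alternating products of centred elements it gives freeness by induction.
-/

open TensorProduct
open Finset.HasAntidiagonal (antidiagonal mem_antidiagonal)

section AlternatingWords

variable {T : Type*} [Ring T] [Algebra ℂ T] {ι : Type*}

/-- `IsAlternating f V n i k w` says that `w = a₁ ⋯ aₙ` is an alternating centred word of length
`n ≥ 1`: each `aₘ` lies in some `V (t m)` and satisfies `f aₘ = 0`, consecutive indices `t m` are
distinct, `t 1 = i` and `t n = k`. -/
inductive IsAlternating (f : T →ₗ[ℂ] ℂ) (V : ι → Subalgebra ℂ T) : ℕ → ι → ι → T → Prop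
  | single {i : ι} {a : T} (ha : a ∈ V i) (hfa : f a = 0) : IsAlternating f V 1 i i a
  | cons {n : ℕ} {i j k : ι} {a w : T} (ha : a ∈ V i) (hfa : f a = 0) (hij : i ≠ j)
      (hw : IsAlternating f V n j k w) : IsAlternating f V (n + 1) i k (a * w)

/-- Freeness of the subalgebras `V i`, tested on alternating centred words of length at most `n`
only; this is the invariant for proving freeness by induction on the length. -/
def FreeUpTo (f : T →ₗ[ℂ] ℂ) (V : ι → Subalgebra ℂ T) (n : ℕ) : Prop :=
  ∀ ⦃m : ℕ⦄ ⦃i k : ι⦄ ⦃w : T⦄, m ≤ n → IsAlternating f V m i k w → f w = 0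

/-- The linear span of `1` and the alternating centred words. -/
def alternatingSpan (f : T →ₗ[ℂ] ℂ) (V : ι → Subalgebra ℂ T) : Submodule ℂ T :=
  Submodule.span ℂ (insert 1 {w | ∃ n i k, IsAlternating f V n i k w})

variable {f : T →ₗ[ℂ] ℂ} {V : ι → Subalgebra ℂ T} {n m : ℕ} {i j k l : ι} {a v w : T}

lemma sub_smul_one_mem {W : Subalgebra ℂ T} (ha : a ∈ W) (r : ℂ) : a - r • (1 : T) ∈ W :=
  W.sub_mem ha (W.smul_mem W.one_mem r)

lemma map_sub_map_smul_one (f1 : f 1 = 1) (a : T) : f (a - f a • (1 : T)) = 0 := by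
  simp [f1]

namespace IsAlternating

lemma mul (hv : IsAlternating f V n i j v) (hw : IsAlternating f V m k l w) (hjk : j ≠ k) :
    IsAlternating f V (n + m) i l (v * w) := by
  induction hv with
  | single ha hfa => exact add_comm m 1 ▸ cons ha hfa hjk hw
  | cons ha hfa hij _ ih =>
    exact mul_assoc _ _ w ▸ Nat.add_right_comm _ _ m ▸ cons ha hfa hij (ih hjk)

lemma single_or_exists_eq_mul (hw : IsAlternating f V n i k w) :
    (n = 1 ∧ i = k ∧ w ∈ V k ∧ f w = 0) ∨ ∃ m j v a, n = m + 1 ∧ IsAlternating f V m i j v ∧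
      j ≠ k ∧ a ∈ V k ∧ f a = 0 ∧ w = v * a := by
  induction hw with
  | single ha hfa => exact .inl ⟨rfl, rfl, ha, hfa⟩
  | cons hb hfb hij _ ih =>
    obtain ⟨rfl, rfl, ha, hfa⟩ | ⟨m, l, v, a, rfl, hv, hl, ha, hfa, rfl⟩ := ih
    · exact .inr ⟨1, _, _, _, rfl, single hb hfb, hij, ha, hfa, rfl⟩
    · exact .inr ⟨m + 1, l, _, a, rfl, cons hb hfb hij hv, hl, ha, hfa, (mul_assoc _ _ _).symm⟩

lemma exists_eq_mul_of_ne (hw : IsAlternating f V n i k w) (hik : i ≠ k) :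
    ∃ m j v a, n = m + 1 ∧ IsAlternating f V m i j v ∧ j ≠ k ∧ a ∈ V k ∧ f a = 0 ∧ w = v * a :=
  hw.single_or_exists_eq_mul.resolve_left fun h => hik h.2.1

lemma map {T' : Type*} [Ring T'] [Algebra ℂ T'] {V' : ι → Subalgebra ℂ T'} (g : T' →ₐ[ℂ] T)
    (hg : ∀ i, ∀ a ∈ V' i, g a ∈ V i) {w : T'}
    (hw : IsAlternating (f ∘ₗ g.toLinearMap) V' n i k w) : IsAlternating f V n i k (g w) := by
  induction hw with
  | single ha hfa => exact single (hg _ _ ha) hfa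
  | cons ha hfa hij _ ih => exact map_mul g _ _ ▸ cons (hg _ _ ha) hfa hij ih

lemma exists_ofFn (hw : IsAlternating f V n i k w) :
    ∃ (m : ℕ) (t : Fin (m + 1) → ι) (z : Fin (m + 1) → T), t 0 = i ∧ (∀ p, z p ∈ V (t p)) ∧
      (∀ p, f (z p) = 0) ∧ (∀ p : Fin m, t p.castSucc ≠ t p.succ) ∧ (List.ofFn z).prod = w := by
  induction hw with
  | @single i a ha hfa => exact ⟨0, fun _ => i, fun _ => a, rfl, fun _ => ha, fun _ => hfa, by simp⟩
  | @cons _ i j k a w ha hfa hij _ ih =>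
    obtain ⟨m, t, z, rfl, hz, hfz, ht, rfl⟩ := ih
    refine ⟨m + 1, Fin.cons i t, Fin.cons a z, rfl, Fin.cases ha hz, Fin.cases hfa hfz,
      Fin.cases hij ht, by simp⟩

lemma of_ofFn (t : Fin (n + 1) → ι) (z : Fin (n + 1) → T) (hz : ∀ p, z p ∈ V (t p))
    (hfz : ∀ p, f (z p) = 0) (ht : ∀ p : Fin n, t p.castSucc ≠ t p.succ) :
    IsAlternating f V (n + 1) (t 0) (t (Fin.last n)) (List.ofFn z).prod := by
  induction n with
  | zero => simpa using single (hz 0) (hfz 0)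
  | succ n ih =>
    rw [List.ofFn_succ, List.prod_cons]
    exact cons (hz 0) (hfz 0) (ht 0) (ih (fun p => t p.succ) (fun p => z p.succ) (fun p => hz _)
      (fun p => hfz _) (fun p => ht p.succ))

end IsAlternating

lemma areFree_iff_forall_freeUpTo {X : ι → Set T} :
    AreFree (fun z => f z) X ↔ ∀ n, FreeUpTo f (fun t => Algebra.adjoin ℂ (X t)) n := by
  constructor
  · intro h _ _ i k w _ hw
    obtain ⟨m, t, z, -, hz, hfz, ht, rfl⟩ := hw.exists_ofFn
    exact h m t z hz hfz ht
  · intro h n t z hz hfz ht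
    exact h (n + 1) le_rfl (.of_ofFn t z hz hfz ht)

namespace FreeUpTo

lemma map_mul_eq_zero_left (f1 : f 1 = 1) (h : FreeUpTo f V n) (hw : IsAlternating f V m j k w)
    (hmn : m < n) (ha : a ∈ V i) (hij : i ≠ j) : f (a * w) = 0 := by
  have hcentred := h hmn (.cons (sub_smul_one_mem ha (f a)) (map_sub_map_smul_one f1 a) hij hw)
  simpa [sub_mul, h hmn.le hw] using hcentred

lemma map_mul_eq_zero_right (f1 : f 1 = 1) (h : FreeUpTo f V n) (hw : IsAlternating f V m j k w)
    (hmn : m < n) (ha : a ∈ V i) (hki : k ≠ i) : f (w * a) = 0 := by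
  have hcentred := h hmn
    (hw.mul (.single (sub_smul_one_mem ha (f a)) (map_sub_map_smul_one f1 a)) hki)
  simpa [mul_sub, h hmn.le hw] using hcentred

end FreeUpTo

lemma IsAlternating.mem_alternatingSpan (hw : IsAlternating f V n i k w) :
    w ∈ alternatingSpan f V :=
  Submodule.subset_span (.inr ⟨n, i, k, hw⟩)

lemma one_mem_alternatingSpan : 1 ∈ alternatingSpan f V :=
  Submodule.subset_span (.inl rfl)

lemma mem_alternatingSpan_of_mem (f1 : f 1 = 1) (ha : a ∈ V i) : a ∈ alternatingSpan f V := by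
  have hcentred : IsAlternating f V 1 i i (a - f a • (1 : T)) :=
    .single (sub_smul_one_mem ha (f a)) (map_sub_map_smul_one f1 a)
  exact sub_add_cancel a (f a • (1 : T)) ▸ add_mem hcentred.mem_alternatingSpan
    (Submodule.smul_mem _ _ one_mem_alternatingSpan)

lemma IsAlternating.mul_mem_alternatingSpan_of_ne (f1 : f 1 = 1) (hw : IsAlternating f V n j k w)
    (ha : a ∈ V i) (hij : i ≠ j) : a * w ∈ alternatingSpan f V := by
  have hcentred := cons (sub_smul_one_mem ha (f a)) (map_sub_map_smul_one f1 a) hij hw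
  have hdecomp : a * w = (a - f a • (1 : T)) * w + f a • w := by simp [sub_mul]
  exact hdecomp ▸ add_mem hcentred.mem_alternatingSpan
    (Submodule.smul_mem _ _ hw.mem_alternatingSpan)

lemma IsAlternating.mul_mem_alternatingSpan (f1 : f 1 = 1) (hw : IsAlternating f V n j k w)
    (ha : a ∈ V i) : a * w ∈ alternatingSpan f V := by
  rcases eq_or_ne i j with rfl | hij
  · cases hw with
    | single hb _ => exact mem_alternatingSpan_of_mem f1 (mul_mem ha hb)
    | cons hb _ hij hw =>
      exact mul_assoc a _ _ ▸ hw.mul_mem_alternatingSpan_of_ne f1 (mul_mem ha hb) hij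
  · exact hw.mul_mem_alternatingSpan_of_ne f1 ha hij

lemma mul_mem_alternatingSpan (f1 : f 1 = 1) (ha : a ∈ V i) (hw : w ∈ alternatingSpan f V) :
    a * w ∈ alternatingSpan f V := by
  refine Submodule.span_le (p := (alternatingSpan f V).comap (LinearMap.mulLeft ℂ a)).2 ?_ hw
  rintro _ (rfl | ⟨n, j, k, hw⟩)
  · simpa using mem_alternatingSpan_of_mem f1 ha
  · exact hw.mul_mem_alternatingSpan f1 ha

lemma mem_alternatingSpan_of_mem_iSup (f1 : f 1 = 1) (ha : a ∈ ⨆ i, V i) :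
    a ∈ alternatingSpan f V := by
  refine mul_one a ▸ Algebra.iSup_induction V
    (motive := fun a => ∀ w ∈ alternatingSpan f V, a * w ∈ alternatingSpan f V)
    ha ?_ ?_ ?_ ?_ 1 one_mem_alternatingSpan
  · exact fun i a ha w hw => mul_mem_alternatingSpan f1 ha hw
  · exact fun a b iha ihb w hw => add_mul a b w ▸ add_mem (iha w hw) (ihb w hw)
  · exact fun a b iha ihb w hw => mul_assoc a b w ▸ iha _ (ihb w hw)
  · exact fun r w hw => Algebra.smul_def r w ▸ Submodule.smul_mem _ r hw

end AlternatingWords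

section FreeDifferenceQuotient

variable {L T : Type*} [Ring T] [Algebra ℂ T] {val : L → T} {c : L → ℂ} {a : L}

/-- The homomorphism whose upper right corner is the free difference quotient: the corner of a
product of upper triangular matrices is exactly the Leibniz rule. -/
def triangularLift (val : L → T) (c : L → ℂ) :
    FreeAlgebra ℂ L →ₐ[ℂ] Matrix (Fin 2) (Fin 2) (T ⊗[ℂ] T) :=
  FreeAlgebra.lift ℂ fun a => !![val a ⊗ₜ 1, c a • 1; 0, 1 ⊗ₜ val a]

/-- Voiculescu's free difference quotient in the direction `c`, evaluated at `val`: the derivation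
`FreeAlgebra ℂ L → T ⊗ T` with `ι a ↦ c a • (1 ⊗ 1)`. Noncommutative polynomials stay formal, since
the letters `val a` may satisfy relations in `T`. -/
def freeDiff (val : L → T) (c : L → ℂ) : FreeAlgebra ℂ L →ₗ[ℂ] T ⊗[ℂ] T :=
  Matrix.entryLinearMap ℂ _ 0 1 ∘ₗ (triangularLift val c).toLinearMap

lemma triangularLift_eq (P : FreeAlgebra ℂ L) :
    triangularLift val c P =
      !![FreeAlgebra.lift ℂ val P ⊗ₜ 1, freeDiff val c P; 0, 1 ⊗ₜ FreeAlgebra.lift ℂ val P] := by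
  have hentry (P) : freeDiff val c P = triangularLift val c P 0 1 := rfl
  rw [hentry]
  induction P with
  | grade0 r =>
    ext i j
    fin_cases i <;> fin_cases j <;>
      simp [Algebra.algebraMap_eq_smul_one, Algebra.TensorProduct.one_def, TensorProduct.smul_tmul']
  | grade1 a => simp [triangularLift]
  | mul P Q ihP ihQ =>
    rw [map_mul, map_mul, ihP, ihQ]
    simp
  | add P Q ihP ihQ =>
    rw [map_add, map_add, ihP, ihQ]
    simp [TensorProduct.add_tmul, TensorProduct.tmul_add]

@[simp]
lemma freeDiff_ι : freeDiff val c (FreeAlgebra.ι ℂ a) = c a • 1 := by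
  simp [freeDiff, triangularLift]

@[simp]
lemma freeDiff_algebraMap (r : ℂ) : freeDiff val c (algebraMap ℂ _ r) = 0 := by
  simp [freeDiff, Matrix.algebraMap_matrix_apply]

@[simp]
lemma freeDiff_one : freeDiff val c 1 = 0 := by
  simp [freeDiff]

lemma freeDiff_mul (P Q : FreeAlgebra ℂ L) :
    freeDiff val c (P * Q) = FreeAlgebra.lift ℂ val P ⊗ₜ 1 * freeDiff val c Q
      + freeDiff val c P * 1 ⊗ₜ FreeAlgebra.lift ℂ val Q := by
  have hmul := map_mul (triangularLift val c) P Q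
  simp only [triangularLift_eq, Matrix.mul_fin_two] at hmul
  simpa using congr_fun₂ hmul 0 1

lemma freeDiff_ι_pow_succ (n : ℕ) :
    freeDiff val c (FreeAlgebra.ι ℂ a ^ (n + 1)) =
      c a • ∑ p ∈ antidiagonal n, (val a ^ p.1) ⊗ₜ[ℂ] (val a ^ p.2) := by
  induction n with
  | zero => simp [Algebra.TensorProduct.one_def]
  | succ n ih =>
    rw [pow_succ', freeDiff_mul, ih, Finset.Nat.sum_antidiagonal_succ]
    simp [Finset.mul_sum, pow_succ', add_comm]

lemma freeDiff_sum_smul {J : Type*} [Fintype J] (v : J → ℂ) (c : J → L → ℂ)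
    (P : FreeAlgebra ℂ L) :
    freeDiff val (∑ j, v j • c j) P = ∑ j, v j • freeDiff val (c j) P := by
  induction P with
  | grade0 r => simp
  | grade1 a => simp [Finset.sum_smul, mul_smul]
  | mul P Q ihP ihQ =>
    simp [freeDiff_mul, ihP, ihQ, Finset.mul_sum, Finset.sum_mul, Finset.sum_add_distrib]
  | add P Q ihP ihQ => simp [ihP, ihQ, Finset.sum_add_distrib]

lemma freeDiff_smul (r : ℂ) (P : FreeAlgebra ℂ L) :
    freeDiff val (r • c) P = r • freeDiff val c P := by
  simpa using freeDiff_sum_smul (fun _ : Unit => r) (fun _ => c) P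

lemma freeDiff_eq_zero_of_mem_adjoin {K : Set L} (hc : ∀ a ∈ K, c a = 0) {P : FreeAlgebra ℂ L}
    (hP : P ∈ Algebra.adjoin ℂ (FreeAlgebra.ι ℂ '' K)) : freeDiff val c P = 0 := by
  induction hP using Algebra.adjoin_induction with
  | mem _ ha => obtain ⟨a, ha, rfl⟩ := ha; simp [hc a ha]
  | algebraMap r => simp
  | add P Q _ _ ihP ihQ => simp [ihP, ihQ]
  | mul P Q _ _ ihP ihQ => simp [freeDiff_mul, ihP, ihQ]

lemma lift_mem_of_mem_adjoin {K : Set L} {V : Subalgebra ℂ T} (hval : ∀ a ∈ K, val a ∈ V)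
    {P : FreeAlgebra ℂ L} (hP : P ∈ Algebra.adjoin ℂ (FreeAlgebra.ι ℂ '' K)) :
    FreeAlgebra.lift ℂ val P ∈ V := by
  have hle : Algebra.adjoin ℂ (FreeAlgebra.ι ℂ '' K) ≤ V.comap (FreeAlgebra.lift ℂ val) :=
    Algebra.adjoin_le (by rintro _ ⟨a, ha, rfl⟩; simpa using hval a ha)
  exact hle hP

lemma freeDiff_mem_range_map {K : Set L} {V : Subalgebra ℂ T} (hval : ∀ a ∈ K, val a ∈ V)
    {P : FreeAlgebra ℂ L} (hP : P ∈ Algebra.adjoin ℂ (FreeAlgebra.ι ℂ '' K)) :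
    freeDiff val c P ∈ (Algebra.TensorProduct.map V.val V.val).range := by
  have htmul {p q : T} (hp : p ∈ V) (hq : q ∈ V) :
      p ⊗ₜ q ∈ (Algebra.TensorProduct.map V.val V.val).range := ⟨⟨p, hp⟩ ⊗ₜ ⟨q, hq⟩, rfl⟩
  induction hP using Algebra.adjoin_induction with
  | mem _ ha =>
    obtain ⟨a, -, rfl⟩ := ha
    exact freeDiff_ι (val := val) ▸ Subalgebra.smul_mem _ (one_mem _) _
  | algebraMap r => exact freeDiff_algebraMap (val := val) r ▸ zero_mem _
  | add P Q _ _ ihP ihQ => exact map_add (freeDiff val c) P Q ▸ add_mem ihP ihQ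
  | mul P Q hP hQ ihP ihQ =>
    rw [freeDiff_mul]
    exact add_mem (mul_mem (htmul (lift_mem_of_mem_adjoin hval hP) V.one_mem) ihQ)
      (mul_mem ihP (htmul V.one_mem (lift_mem_of_mem_adjoin hval hQ)))

lemma map_freeDiff_eq_zero {K : Set L} {V : Subalgebra ℂ T} (hval : ∀ a ∈ K, val a ∈ V)
    {M : Type*} [AddCommGroup M] [Module ℂ M] {F : T ⊗[ℂ] T →ₗ[ℂ] M}
    (hF : ∀ p ∈ V, ∀ q ∈ V, F (p ⊗ₜ q) = 0)
    {P : FreeAlgebra ℂ L} (hP : P ∈ Algebra.adjoin ℂ (FreeAlgebra.ι ℂ '' K)) :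
    F (freeDiff val c P) = 0 := by
  obtain ⟨y, hy⟩ := freeDiff_mem_range_map (c := c) hval hP
  have hzero : F ∘ₗ (Algebra.TensorProduct.map V.val V.val).toLinearMap = 0 :=
    TensorProduct.ext' fun p q => hF p p.2 q q.2
  rw [← hy]
  exact LinearMap.congr_fun hzero y

end FreeDifferenceQuotient

section SchwingerDyson

variable {L T : Type*} [Ring T] [Algebra ℂ T] {f : T →ₗ[ℂ] ℂ} {val : L → T}

/-- The functional `f ⊗ f` on `T ⊗ T`. -/
def tensorState (f : T →ₗ[ℂ] ℂ) : T ⊗[ℂ] T →ₗ[ℂ] ℂ :=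
  LinearMap.mul' ℂ ℂ ∘ₗ TensorProduct.map f f

@[simp]
lemma tensorState_tmul (p q : T) : tensorState f (p ⊗ₜ q) = f p * f q := rfl

/-- `h` is the conjugate variable (in Voiculescu's sense) for the free difference quotient in the
direction `c`, i.e. the Schwinger–Dyson equation `f (h P) = (f ⊗ f) (∂ P)` holds for all
noncommutative polynomials `P` in the letters `val`. -/
def SchwingerDyson (f : T →ₗ[ℂ] ℂ) (h : T) (val : L → T) (c : L → ℂ) : Prop :=
  ∀ P : FreeAlgebra ℂ L, f (h * FreeAlgebra.lift ℂ val P) = tensorState f (freeDiff val c P)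

lemma SchwingerDyson.sum_smul {J : Type*} [Fintype J] {h : J → T} {c : J → L → ℂ}
    (hSD : ∀ j, SchwingerDyson f (h j) val (c j)) (v : J → ℂ) :
    SchwingerDyson f (∑ j, v j • h j) val (∑ j, v j • c j) := fun P => by
  simp [freeDiff_sum_smul, Finset.sum_mul, fun j => hSD j P]

end SchwingerDyson

section SemicircleMoments

/-- The `n`-th moment of the centred semicircle law of variance `κ`. -/
def semicircleMoment (κ : ℂ) (n : ℕ) : ℂ :=
  if Even n then κ ^ (n / 2) * catalan (n / 2) else 0

variable (κ : ℂ)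

lemma semicircleMoment_two_mul (m : ℕ) : semicircleMoment κ (2 * m) = κ ^ m * catalan m := by
  simp [semicircleMoment]

lemma semicircleMoment_of_odd {n : ℕ} (hn : Odd n) : semicircleMoment κ n = 0 := by
  simp [semicircleMoment, hn]

lemma sum_antidiagonal_semicircleMoment_two_mul (m : ℕ) :
    ∑ p ∈ antidiagonal (2 * m),
        semicircleMoment κ p.1 * semicircleMoment κ p.2 =
      κ ^ m * ∑ p ∈ antidiagonal m, (catalan p.1 * catalan p.2 : ℂ) := by
  rw [Finset.mul_sum]
  symm
  refine Finset.sum_of_injOn (fun p => (2 * p.1, 2 * p.2)) ?_ ?_ ?_ ?_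
  · exact fun p _ q _ h => by simpa [Prod.ext_iff] using h
  · intro p hp
    simp only [Finset.mem_coe, mem_antidiagonal] at hp ⊢
    lia
  · rintro ⟨i, j⟩ hij hnot
    rw [mem_antidiagonal] at hij
    rcases Nat.even_or_odd' i with ⟨k, rfl | rfl⟩
    · refine absurd ⟨(k, m - k), ?_, ?_⟩ hnot
      · simp only [Finset.mem_coe, mem_antidiagonal]; lia
      · simp only [Prod.mk.injEq, true_and]; lia
    · simp [semicircleMoment_of_odd κ ⟨k, rfl⟩]
  · intro p hp
    rw [← mem_antidiagonal.mp hp, semicircleMoment_two_mul, semicircleMoment_two_mul]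
    ring

lemma semicircleMoment_add_two (n : ℕ) :
    semicircleMoment κ (n + 2) = κ * ∑ p ∈ antidiagonal n,
      semicircleMoment κ p.1 * semicircleMoment κ p.2 := by
  rcases Nat.even_or_odd' n with ⟨m, rfl | rfl⟩
  · rw [sum_antidiagonal_semicircleMoment_two_mul, ← mul_add_one, semicircleMoment_two_mul,
      catalan_succ']
    push_cast
    ring
  · rw [semicircleMoment_of_odd κ ⟨m + 1, by ring⟩, Finset.sum_eq_zero, mul_zero]
    intro p hp
    rw [mem_antidiagonal] at hp
    rcases Nat.even_or_odd p.1 with h1 | h1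
    · have h2 : Odd p.2 := by grind
      simp [semicircleMoment_of_odd κ h2]
    · simp [semicircleMoment_of_odd κ h1]

end SemicircleMoments

section SemicircularSchwingerDyson

variable {L T : Type*} [Ring T] [Algebra ℂ T] {f : T →ₗ[ℂ] ℂ} {val : L → T} {c : L → ℂ} {a : L}

lemma tensorState_freeDiff_ι_pow_succ (n : ℕ) :
    tensorState f (freeDiff val c (FreeAlgebra.ι ℂ a ^ (n + 1))) =
      c a * ∑ p ∈ antidiagonal n, f (val a ^ p.1) * f (val a ^ p.2) := by
  simp [freeDiff_ι_pow_succ]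

lemma SchwingerDyson.map_letter_pow (f1 : f 1 = 1) (hSD : SchwingerDyson f (val a) val c) (n : ℕ) :
    f (val a ^ n) = semicircleMoment (c a) n := by
  induction n using Nat.strong_induction_on with
  | h n ih =>
    match n with
    | 0 => simp [f1, semicircleMoment]
    | 1 => simpa [semicircleMoment] using hSD 1
    | n + 2 =>
      have hstep := hSD (FreeAlgebra.ι ℂ a ^ (n + 1))
      rw [tensorState_freeDiff_ι_pow_succ, map_pow, FreeAlgebra.lift_ι_apply, ← pow_succ'] at hstep
      rw [hstep, semicircleMoment_add_two]
      congr 1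
      refine Finset.sum_congr rfl fun p hp => ?_
      rw [mem_antidiagonal] at hp
      rw [ih _ (by lia), ih _ (by lia)]

lemma eqOn_adjoin_singleton {M : Type*} [AddCommGroup M] [Module ℂ M] {F G : T →ₗ[ℂ] M} {x : T}
    (h : ∀ n, F (x ^ n) = G (x ^ n)) : Set.EqOn F G (Algebra.adjoin ℂ {x}) := by
  rw [← Subalgebra.coe_toSubmodule, Algebra.adjoin_eq_span]
  refine LinearMap.eqOn_span ?_
  rintro _ hy
  obtain ⟨n, rfl⟩ := Submonoid.mem_closure_singleton.mp hy
  exact h n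

lemma map_mul_lift_eq_of_semicircleMoment
    (hs : ∀ n, f (val a ^ n) = semicircleMoment (c a) n) {P : FreeAlgebra ℂ L}
    (hP : P ∈ Algebra.adjoin ℂ {FreeAlgebra.ι ℂ a}) :
    f (val a * FreeAlgebra.lift ℂ val P) = tensorState f (freeDiff val c P) := by
  refine eqOn_adjoin_singleton
    (F := f ∘ₗ LinearMap.mulLeft ℂ (val a) ∘ₗ (FreeAlgebra.lift ℂ val).toLinearMap)
    (G := tensorState f ∘ₗ freeDiff val c) (fun n => ?_) hP
  suffices f (val a ^ (n + 1)) = tensorState f (freeDiff val c (FreeAlgebra.ι ℂ a ^ n)) by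
    simpa [← pow_succ'] using this
  match n with
  | 0 => simpa [semicircleMoment] using hs 1
  | n + 1 => simp only [tensorState_freeDiff_ι_pow_succ, hs, semicircleMoment_add_two]

end SemicircularSchwingerDyson

section FreeConjugateVariable

variable {L T ι : Type*} [Ring T] [Algebra ℂ T] {f : T →ₗ[ℂ] ℂ} {V : ι → Subalgebra ℂ T}
  {val : L → T} {idx : L → ι} {c : L → ℂ}

/-- The joint distribution of the letters `val` with respect to `f`. -/
abbrev jointDistribution (f : T →ₗ[ℂ] ℂ) (val : L → T) : FreeAlgebra ℂ L →ₗ[ℂ] ℂ :=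
  f ∘ₗ (FreeAlgebra.lift ℂ val).toLinearMap

/-- Noncommutative polynomials in the letters of index `i`. -/
def letterSubalgebra (idx : L → ι) (i : ι) : Subalgebra ℂ (FreeAlgebra ℂ L) :=
  Algebra.adjoin ℂ (FreeAlgebra.ι ℂ '' {a | idx a = i})

lemma iSup_letterSubalgebra (idx : L → ι) : ⨆ i, letterSubalgebra idx i = ⊤ := by
  rw [eq_top_iff, ← FreeAlgebra.adjoin_range_ι, Algebra.adjoin_le_iff]
  rintro _ ⟨a, rfl⟩
  exact Algebra.mem_iSup_of_mem (idx a) (Algebra.subset_adjoin ⟨a, rfl, rfl⟩)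

lemma lift_mem_of_mem_letterSubalgebra (hval : ∀ a, val a ∈ V (idx a)) (i : ι)
    (P : FreeAlgebra ℂ L) (hP : P ∈ letterSubalgebra idx i) : FreeAlgebra.lift ℂ val P ∈ V i :=
  lift_mem_of_mem_adjoin (fun a ha => ha ▸ hval a) hP

lemma tensorState_mul_freeDiff_mul_eq_zero (hval : ∀ a, val a ∈ V (idx a)) {i : ι}
    {P : FreeAlgebra ℂ L} (hP : P ∈ letterSubalgebra idx i) {u w : T}
    (h : (∀ p ∈ V i, f (u * p) = 0) ∨ (∀ q ∈ V i, f (q * w) = 0)) :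
    tensorState f (u ⊗ₜ 1 * (freeDiff val c P * 1 ⊗ₜ w)) = 0 := by
  refine map_freeDiff_eq_zero (F := tensorState f ∘ₗ LinearMap.mulLeft ℂ (u ⊗ₜ 1) ∘ₗ
    LinearMap.mulRight ℂ (1 ⊗ₜ w)) (fun a (ha : idx a = i) => ha ▸ hval a) (fun p hp q hq => ?_) hP
  rcases h with h | h
  · simp [h p hp]
  · simp [h q hq]

lemma IsAlternating.tensorState_mul_freeDiff_eq_zero (f1 : f 1 = 1) (hfree : ∀ n, FreeUpTo f V n)
    (hval : ∀ a, val a ∈ V (idx a)) {n m : ℕ} {i j k l : ι} {P : FreeAlgebra ℂ L} {u : T}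
    (hP : IsAlternating (jointDistribution f val) (letterSubalgebra idx) n j k P)
    (hu : IsAlternating f V m l i u) (hij : i ≠ j) :
    tensorState f (u ⊗ₜ 1 * freeDiff val c P) = 0 := by
  have hmap_mul {p : T} {i j l : ι} {m : ℕ} {u : T} (hu : IsAlternating f V m l i u) (hij : i ≠ j)
      (hp : p ∈ V j) : f (u * p) = 0 :=
    (hfree (m + 1)).map_mul_eq_zero_right f1 hu m.lt_succ_self hp hij
  induction hP generalizing u i m with
  | single ha _ =>
    simpa [← Algebra.TensorProduct.one_def] using
      tensorState_mul_freeDiff_mul_eq_zero (c := c) (w := 1) hval ha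
        (.inl fun p hp => hmap_mul hu hij hp)
  | @cons _ j _ _ a Q ha hfa hj _ ih =>
    have hua := hu.mul (.single (lift_mem_of_mem_letterSubalgebra hval _ _ ha) hfa) hij
    have hleft := ih hua hj
    have hright := tensorState_mul_freeDiff_mul_eq_zero (c := c)
      (w := FreeAlgebra.lift ℂ val Q) hval ha (.inl fun p hp => hmap_mul hu hij hp)
    rw [freeDiff_mul, mul_add, map_add, hright, add_zero, ← mul_assoc]
    simpa using hleft

lemma IsAlternating.tensorState_freeDiff_mul_eq_zero (f1 : f 1 = 1)
    (hfree : ∀ n, FreeUpTo f V n) (hval : ∀ a, val a ∈ V (idx a)) {n : ℕ} {i j k : ι}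
    {P Q : FreeAlgebra ℂ L} (hP : P ∈ letterSubalgebra idx i)
    (hfP : f (FreeAlgebra.lift ℂ val P) = 0) (hij : i ≠ j)
    (hQ : IsAlternating (jointDistribution f val) (letterSubalgebra idx) n j k Q) :
    tensorState f (freeDiff val c (P * Q)) = 0 := by
  have hevP := lift_mem_of_mem_letterSubalgebra hval i P hP
  have hevQ := hQ.map _ (lift_mem_of_mem_letterSubalgebra hval)
  have hleft := hQ.tensorState_mul_freeDiff_eq_zero (c := c) f1 hfree hval (.single hevP hfP) hij
  have hright := tensorState_mul_freeDiff_mul_eq_zero (c := c) (u := 1) hval hP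
    (.inr fun q hq => (hfree (n + 1)).map_mul_eq_zero_left f1 hevQ n.lt_succ_self hq hij)
  rw [← Algebra.TensorProduct.one_def, one_mul] at hright
  rw [freeDiff_mul, map_add, hleft, hright, add_zero]

lemma IsAlternating.map_mul_lift_eq (f1 : f 1 = 1) (hfree : ∀ n, FreeUpTo f V n)
    (hval : ∀ a, val a ∈ V (idx a)) {g : ι} {h : T} (hh : h ∈ V g)
    (hc : ∀ a, idx a ≠ g → c a = 0)
    (hSD : ∀ P ∈ letterSubalgebra idx g,
      f (h * FreeAlgebra.lift ℂ val P) = tensorState f (freeDiff val c P))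
    {n : ℕ} {i k : ι} {P : FreeAlgebra ℂ L}
    (hP : IsAlternating (jointDistribution f val) (letterSubalgebra idx) n i k P) :
    f (h * FreeAlgebra.lift ℂ val P) = tensorState f (freeDiff val c P) := by
  have hmap_mul {m : ℕ} {i j k : ι} {a : T} {Q : FreeAlgebra ℂ L} (ha : a ∈ V i) (hij : i ≠ j)
      (hQ : IsAlternating (jointDistribution f val) (letterSubalgebra idx) m j k Q) :
      f (a * FreeAlgebra.lift ℂ val Q) = 0 :=
    (hfree (m + 1)).map_mul_eq_zero_left f1 (hQ.map _ (lift_mem_of_mem_letterSubalgebra hval))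
      m.lt_succ_self ha hij
  rcases eq_or_ne g i with rfl | hgi
  · cases hP with
    | single ha _ => exact hSD P ha
    | @cons _ _ _ _ a Q ha hfa hj hQ =>
      rw [hQ.tensorState_freeDiff_mul_eq_zero f1 hfree hval ha hfa hj,
        map_mul (FreeAlgebra.lift ℂ val), ← mul_assoc]
      exact hmap_mul (mul_mem hh (lift_mem_of_mem_letterSubalgebra hval g a ha)) hj hQ
  · rw [hmap_mul hh hgi hP]
    cases hP with
    | single ha _ =>
      rw [freeDiff_eq_zero_of_mem_adjoin (fun b hb => hc b fun hbg => hgi (hbg.symm.trans hb)) ha,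
        map_zero]
    | cons ha hfa hj hQ =>
      exact (hQ.tensorState_freeDiff_mul_eq_zero f1 hfree hval ha hfa hj).symm

lemma schwingerDyson_of_freeUpTo (f1 : f 1 = 1) (hfree : ∀ n, FreeUpTo f V n)
    (hval : ∀ a, val a ∈ V (idx a)) {g : ι} {h : T} (hh : h ∈ V g)
    (hc : ∀ a, idx a ≠ g → c a = 0)
    (hSD : ∀ P ∈ letterSubalgebra idx g,
      f (h * FreeAlgebra.lift ℂ val P) = tensorState f (freeDiff val c P)) :
    SchwingerDyson f h val c := by
  intro P
  have hspan : P ∈ alternatingSpan (jointDistribution f val) (letterSubalgebra idx) :=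
    mem_alternatingSpan_of_mem_iSup (by simpa using f1)
      (iSup_letterSubalgebra idx ▸ Algebra.mem_top)
  refine LinearMap.eqOn_span (f := f ∘ₗ LinearMap.mulLeft ℂ h ∘ₗ
    (FreeAlgebra.lift ℂ val).toLinearMap) (g := tensorState f ∘ₗ freeDiff val c) ?_ hspan
  rintro P (rfl | ⟨n, i, k, hP⟩)
  · exact hSD 1 (one_mem _)
  · exact hP.map_mul_lift_eq f1 hfree hval hh hc hSD

lemma schwingerDyson_of_semicircleMoment (f1 : f 1 = 1) (hfree : ∀ n, FreeUpTo f V n)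
    (hval : ∀ a, val a ∈ V (idx a)) {a : L} (ha : ∀ b, idx b = idx a → b = a)
    (hs : ∀ n, f (val a ^ n) = semicircleMoment (c a) n) (hc : ∀ b ≠ a, c b = 0) :
    SchwingerDyson f (val a) val c := by
  have hletters : letterSubalgebra idx (idx a) = Algebra.adjoin ℂ {FreeAlgebra.ι ℂ a} := by
    have hset : {b | idx b = idx a} = {a} := Set.ext fun b => ⟨ha b, fun h => congrArg idx h⟩
    rw [letterSubalgebra, hset, Set.image_singleton]
  exact schwingerDyson_of_freeUpTo f1 hfree hval (hval a)
    (fun b hb => hc b fun hba => hb (hba ▸ rfl))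
    fun P hP => map_mul_lift_eq_of_semicircleMoment hs (hletters ▸ hP)

end FreeConjugateVariable

section FreeSemicircularFamily

variable {J T : Type*} [Fintype J] [Ring T] [Algebra ℂ T] {f : T →ₗ[ℂ] ℂ}

lemma schwingerDyson_sum_smul_of_areFree (f1 : f 1 = 1) {s : J → T} {B : Set T}
    (hfree : AreFree (fun z => f z) (Sum.elim (fun j => {s j}) fun _ : Unit => B))
    (hs : ∀ j n, f (s j ^ n) = semicircleMoment 1 n) (v : J → ℂ) :
    SchwingerDyson f (∑ j, v j • s j) (Sum.elim s ((↑) : B → T)) (Sum.elim v 0) := by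
  classical
  have hsum : Sum.elim v (0 : B → ℂ) = ∑ j, v j • Pi.single (.inl j) 1 := by
    ext (j | b) <;> simp [Pi.single_apply]
  rw [hsum]
  refine SchwingerDyson.sum_smul (fun j => ?_) v
  refine schwingerDyson_of_semicircleMoment (a := .inl j) (val := Sum.elim s Subtype.val)
    (c := Pi.single (.inl j) 1) (idx := Sum.map id fun _ => ()) f1
    (areFree_iff_forall_freeUpTo.mp hfree) ?_ ?_ (by simpa using hs j) ?_
  · rintro (j | b)
    · exact Algebra.subset_adjoin rfl
    · exact Algebra.subset_adjoin b.2
  · rintro (k | b) h <;> simp_all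
  · exact fun b hb => Pi.single_eq_of_ne hb 1

end FreeSemicircularFamily

section EntryTensor

variable {n T : Type*} [Ring T] [Algebra ℂ T]

/-- The map `X ⊗ Y ↦ X p j ⊗ Y i q`. -/
def entryTensor (p j i q : n) : Matrix n n T ⊗[ℂ] Matrix n n T →ₗ[ℂ] T ⊗[ℂ] T :=
  TensorProduct.map (Matrix.entryLinearMap ℂ T p j) (Matrix.entryLinearMap ℂ T i q)

@[simp]
lemma entryTensor_tmul (p j i q : n) (X Y : Matrix n n T) :
    entryTensor p j i q (X ⊗ₜ Y) = X p j ⊗ₜ Y i q := rfl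

end EntryTensor

section MatrixState

variable {n T : Type*} [Fintype n] [Ring T] [Algebra ℂ T] {f : T →ₗ[ℂ] ℂ}

/-- The functional `tr ⊗ f` on matrices, with `tr` the normalized trace. -/
def matrixState (n : Type*) [Fintype n] (f : T →ₗ[ℂ] ℂ) : Matrix n n T →ₗ[ℂ] ℂ :=
  (Fintype.card n : ℂ)⁻¹ • f ∘ₗ Matrix.traceLinearMap n ℂ T

lemma matrixState_apply (X : Matrix n n T) :
    matrixState n f X = (Fintype.card n : ℂ)⁻¹ * ∑ i, f (X i i) := by
  simp [matrixState, Matrix.trace]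

lemma matrixState_one [DecidableEq n] [Nonempty n] (f1 : f 1 = 1) : matrixState n f 1 = 1 := by
  simp [matrixState_apply, f1]

lemma matrixState_mul (X Y : Matrix n n T) :
    matrixState n f (X * Y) = (Fintype.card n : ℂ)⁻¹ * ∑ i, ∑ j, f (X i j * Y j i) := by
  simp [matrixState_apply, Matrix.mul_apply]

lemma matrixState_mul_comm (ftr : ∀ x y, f (x * y) = f (y * x)) (X Y : Matrix n n T) :
    matrixState n f (X * Y) = matrixState n f (Y * X) := by
  rw [matrixState_mul, matrixState_mul, Finset.sum_comm]
  simp only [ftr (X _ _)]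

lemma entryTensor_tmul_one_mul [DecidableEq n] (p j i q : n) (X : Matrix n n T)
    (Z : Matrix n n T ⊗[ℂ] Matrix n n T) :
    entryTensor p j i q (X ⊗ₜ 1 * Z) = ∑ r, X p r ⊗ₜ 1 * entryTensor r j i q Z := by
  induction Z with
  | zero => simp
  | tmul Y Y' => simp [Matrix.mul_apply, TensorProduct.sum_tmul]
  | add Z Z' ih ih' => simp only [mul_add, map_add, ih, ih', Finset.sum_add_distrib]

lemma entryTensor_mul_one_tmul [DecidableEq n] (p j i q : n) (X : Matrix n n T)
    (Z : Matrix n n T ⊗[ℂ] Matrix n n T) :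
    entryTensor p j i q (Z * 1 ⊗ₜ X) = ∑ r, entryTensor p j i r Z * 1 ⊗ₜ X r q := by
  induction Z with
  | zero => simp
  | tmul Y Y' => simp [Matrix.mul_apply, TensorProduct.tmul_sum]
  | add Z Z' ih ih' => simp only [add_mul, map_add, ih, ih', Finset.sum_add_distrib]

lemma tensorState_matrixState [DecidableEq n] [Nonempty n] (Z : Matrix n n T ⊗[ℂ] Matrix n n T) :
    Fintype.card n * tensorState (matrixState n f) Z =
      (Fintype.card n : ℂ)⁻¹ * ∑ i, ∑ j, tensorState f (entryTensor j j i i Z) := by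
  induction Z with
  | zero => simp
  | tmul X Y =>
    have hcard : (Fintype.card n : ℂ) ≠ 0 := Nat.cast_ne_zero.mpr Fintype.card_ne_zero
    simp only [tensorState_tmul, entryTensor_tmul, matrixState_apply, ← Finset.sum_mul,
      ← Finset.mul_sum]
    field_simp
  | add Z Z' ih ih' => simp only [map_add, mul_add, ih, ih', Finset.sum_add_distrib]

variable [DecidableEq n] {K L : Type*} {val : L → T} {c : n → n → L → ℂ} {γ : K → ℂ}
  {e : K → Matrix n n (FreeAlgebra ℂ L)}

/-- The values at `val` of a family of matrices of noncommutative polynomials. -/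
def evalMatrix (val : L → T) (e : K → Matrix n n (FreeAlgebra ℂ L)) (a : K) : Matrix n n T :=
  (FreeAlgebra.lift ℂ val).mapMatrix (e a)

lemma lift_evalMatrix (Q : FreeAlgebra ℂ K) (p q : n) :
    FreeAlgebra.lift ℂ (evalMatrix val e) Q p q =
      FreeAlgebra.lift ℂ val (FreeAlgebra.lift ℂ e Q p q) := by
  have hcomp : FreeAlgebra.lift ℂ (evalMatrix val e) =
      (FreeAlgebra.lift ℂ val).mapMatrix.comp (FreeAlgebra.lift ℂ e) := by
    ext; simp [evalMatrix]
  rw [hcomp, AlgHom.comp_apply, AlgHom.mapMatrix_apply, Matrix.map_apply]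

lemma freeDiff_entry
    (he : ∀ i j p q a, freeDiff val (c i j) (e a p q) =
      γ a • entryTensor p j i q (1 : Matrix n n T ⊗[ℂ] Matrix n n T))
    (i j p q : n) (Q : FreeAlgebra ℂ K) :
    freeDiff val (c i j) (FreeAlgebra.lift ℂ e Q p q) =
      entryTensor p j i q (freeDiff (evalMatrix val e) γ Q) := by
  induction Q generalizing p q with
  | grade0 r => rcases eq_or_ne p q with rfl | h <;> simp [Matrix.algebraMap_matrix_apply, *]
  | grade1 a => simp [he]
  | mul P Q ihP ihQ =>
    simp [freeDiff_mul, Matrix.mul_apply, ihP, ihQ, entryTensor_tmul_one_mul,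
      entryTensor_mul_one_tmul, lift_evalMatrix, Finset.sum_add_distrib]
  | add P Q ihP ihQ => simp [ihP, ihQ]

theorem SchwingerDyson.matrix [Nonempty n] {S : Matrix n n T}
    (hSD : ∀ i j, SchwingerDyson f (S i j) val (c i j))
    (he : ∀ i j p q a, freeDiff val (c i j) (e a p q) =
      γ a • entryTensor p j i q (1 : Matrix n n T ⊗[ℂ] Matrix n n T)) :
    SchwingerDyson (matrixState n f) S (evalMatrix val e) ((Fintype.card n : ℂ) • γ) := by
  intro Q
  calc matrixState n f (S * FreeAlgebra.lift ℂ (evalMatrix val e) Q)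
      = (Fintype.card n : ℂ)⁻¹ * ∑ i, ∑ j,
          f (S i j * FreeAlgebra.lift ℂ val (FreeAlgebra.lift ℂ e Q j i)) := by
        simp only [matrixState_mul, lift_evalMatrix]
    _ = (Fintype.card n : ℂ)⁻¹ * ∑ i, ∑ j,
          tensorState f (entryTensor j j i i (freeDiff (evalMatrix val e) γ Q)) := by
        simp only [hSD _ _ _, freeDiff_entry he]
    _ = tensorState (matrixState n f)
          (freeDiff (evalMatrix val e) ((Fintype.card n : ℂ) • γ) Q) := by
        rw [freeDiff_smul, map_smul, smul_eq_mul, tensorState_matrixState]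

end MatrixState

section FreenessFromSchwingerDyson

variable {L T ι : Type*} [Ring T] [Algebra ℂ T] {f : T →ₗ[ℂ] ℂ} {V : ι → Subalgebra ℂ T}
  {val : L → T} {idx : L → ι} {c : L → ℂ} {m n : ℕ} {i k : ι} {w : T}

lemma exists_mem_letterSubalgebra_lift_eq (hV : V i = Algebra.adjoin ℂ (val '' {b | idx b = i}))
    {a : T} (ha : a ∈ V i) : ∃ P ∈ letterSubalgebra idx i, FreeAlgebra.lift ℂ val P = a := by
  have hmap : (letterSubalgebra idx i).map (FreeAlgebra.lift ℂ val) = V i := by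
    rw [letterSubalgebra, AlgHom.map_adjoin, hV, ← Set.image_comp, FreeAlgebra.ι_comp_lift]
  exact Subalgebra.mem_map.mp (hmap ▸ ha)

lemma IsAlternating.exists_lift_eq (f1 : f 1 = 1)
    (hV : ∀ i, V i = Algebra.adjoin ℂ (val '' {b | idx b = i}))
    (hfree : FreeUpTo f V n) (hc : ∀ b, idx b = k → c b = 0)
    (hw : IsAlternating f V m i k w) (hmn : m ≤ n) :
    ∃ P, FreeAlgebra.lift ℂ val P = w ∧ ∀ u, tensorState f (u ⊗ₜ 1 * freeDiff val c P) = 0 := by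
  have hval (b : L) : val b ∈ V (idx b) := hV (idx b) ▸ Algebra.subset_adjoin ⟨b, rfl, rfl⟩
  induction hw with
  | single ha _ =>
    obtain ⟨P, hP, rfl⟩ := exists_mem_letterSubalgebra_lift_eq (hV _) ha
    exact ⟨P, rfl, fun u => by rw [freeDiff_eq_zero_of_mem_adjoin hc hP, mul_zero, map_zero]⟩
  | cons ha _ hij hw ih =>
    obtain ⟨P, hP, rfl⟩ := exists_mem_letterSubalgebra_lift_eq (hV _) ha
    obtain ⟨Q, rfl, hQ⟩ := ih hc (Nat.le_of_succ_le hmn)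
    refine ⟨P * Q, map_mul _ P Q, fun u => ?_⟩
    have hright := tensorState_mul_freeDiff_mul_eq_zero (c := c) (u := u) hval hP
      (.inr fun q hq => hfree.map_mul_eq_zero_left f1 hw hmn hq hij)
    rw [freeDiff_mul, mul_add, map_add, hright, add_zero, ← mul_assoc,
      Algebra.TensorProduct.tmul_mul_tmul, one_mul]
    exact hQ _

lemma SchwingerDyson.map_pow_mul_eq_zero {a : L} {P : FreeAlgebra ℂ L}
    (hSD : SchwingerDyson f (val a) val c) (hw : f (FreeAlgebra.lift ℂ val P) = 0)
    (hP : ∀ u, tensorState f (u ⊗ₜ 1 * freeDiff val c P) = 0) (r : ℕ) :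
    f (val a ^ r * FreeAlgebra.lift ℂ val P) = 0 := by
  induction r using Nat.strong_induction_on with
  | h r ih =>
    match r with
    | 0 => simpa using hw
    | r + 1 =>
      have hstep := hSD (FreeAlgebra.ι ℂ a ^ r * P)
      rw [freeDiff_mul, map_add, hP, zero_add, map_mul (FreeAlgebra.lift ℂ val), map_pow,
        FreeAlgebra.lift_ι_apply, ← mul_assoc, ← pow_succ'] at hstep
      rw [hstep]
      match r with
      | 0 => simp
      | r + 1 =>
        rw [freeDiff_ι_pow_succ, smul_mul_assoc, Finset.sum_mul, map_smul, map_sum,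
          Finset.sum_eq_zero, smul_zero]
        intro p hp
        rw [mem_antidiagonal] at hp
        simp [ih p.2 (by lia)]

lemma SchwingerDyson.map_mul_eq_zero (f1 : f 1 = 1) {a : L}
    (hSD : SchwingerDyson f (val a) val c)
    (hV : ∀ i, V i = Algebra.adjoin ℂ (val '' {b | idx b = i}))
    (hfree : FreeUpTo f V n) (hc : ∀ b, idx b = k → c b = 0)
    (hw : IsAlternating f V n i k w) {q : T} (hq : q ∈ Algebra.adjoin ℂ {val a}) :
    f (q * w) = 0 := by
  obtain ⟨P, rfl, hP⟩ := hw.exists_lift_eq f1 hV hfree hc le_rfl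
  exact eqOn_adjoin_singleton (F := f ∘ₗ LinearMap.mulRight ℂ (FreeAlgebra.lift ℂ val P)) (G := 0)
    (fun r => hSD.map_pow_mul_eq_zero (hfree le_rfl hw) hP r) hq

lemma FreeUpTo.zero : FreeUpTo f V 0 := by
  intro m i k w hm hw
  cases hw <;> simp at hm

lemma FreeUpTo.map_cyclic_eq_zero (f1 : f 1 = 1) (ftr : ∀ x y, f (x * y) = f (y * x))
    (hfree : FreeUpTo f V n) (hw : IsAlternating f V (n + 1) i i w) : f w = 0 := by
  cases hw with
  | single _ hfa => exact hfa
  | @cons _ _ _ _ a _ ha _ hij hw =>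
    obtain ⟨m, j, v, b, rfl, hv, -, hb, -, rfl⟩ := hw.exists_eq_mul_of_ne hij.symm
    rw [← mul_assoc, ftr, ← mul_assoc]
    exact hfree.map_mul_eq_zero_left f1 hv m.lt_succ_self (mul_mem hb ha) hij

lemma FreeUpTo.succ_of_fin_two (f1 : f 1 = 1) (ftr : ∀ x y, f (x * y) = f (y * x))
    {V : Fin 2 → Subalgebra ℂ T} (hfree : FreeUpTo f V n)
    (hmul : ∀ {i w q}, IsAlternating f V n i 1 w → q ∈ V 0 → f (q * w) = 0) :
    FreeUpTo f V (n + 1) := by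
  intro m i k w hm hw
  rcases Nat.le_succ_iff.mp hm with hm | rfl
  · exact hfree hm hw
  rcases eq_or_ne i k with rfl | hik
  · exact hfree.map_cyclic_eq_zero f1 ftr hw
  match i, k with
  | 0, 0 | 1, 1 => exact absurd rfl hik
  | 0, 1 =>
    cases hw with
    | cons ha _ _ hw => exact hmul hw ha
  | 1, 0 =>
    obtain ⟨m, j, v, a, hm, hv, hj, ha, -, rfl⟩ := hw.exists_eq_mul_of_ne hik
    obtain rfl : n = m := Nat.succ_injective hm
    obtain rfl : j = 1 := Fin.eq_one_of_ne_zero j hj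
    rw [ftr]
    exact hmul hv ha

theorem SchwingerDyson.areFree (f1 : f 1 = 1) (ftr : ∀ x y, f (x * y) = f (y * x)) {s : T}
    {C : Set T} {κ : ℂ}
    (hSD : SchwingerDyson f s (Sum.elim (fun _ : Unit => s) ((↑) : C → T))
      (Sum.elim (fun _ => κ) 0)) :
    AreFree (fun z => f z) ![{s}, C] := by
  rw [areFree_iff_forall_freeUpTo]
  let idx : Unit ⊕ C → Fin 2 := Sum.elim (fun _ => 0) fun _ => 1
  have himage (i) : ![{s}, C] i =
      Sum.elim (fun _ : Unit => s) ((↑) : C → T) '' {b | idx b = i} := by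
    fin_cases i <;> ext <;> simp [idx, eq_comm]
  intro n
  induction n with
  | zero => exact .zero
  | succ n ih =>
    refine ih.succ_of_fin_two f1 ftr fun hw hq => ?_
    exact SchwingerDyson.map_mul_eq_zero (a := .inl ()) (idx := idx) f1 hSD
      (fun i => congrArg (Algebra.adjoin ℂ) (himage i)) ih (by simp [idx]) hw hq

end FreenessFromSchwingerDyson

section SemicircularMatrix

variable {n J T : Type*} [Fintype n] [DecidableEq n] [Nonempty n] [Fintype J] [Ring T]
  [Algebra ℂ T] {f : T →ₗ[ℂ] ℂ}

/-- The hypothesis `hv` says that the entries of the matrix have the covariance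
`E[S i j * S p q] = δ (p, q) (j, i)` of a Hermitian matrix with independent entries. -/
theorem schwingerDyson_matrix_of_areFree (f1 : f 1 = 1) {s : J → T} {B : Set T}
    (hfree : AreFree (fun z => f z) (Sum.elim (fun k => {s k}) fun _ : Unit => B))
    (hs : ∀ k m, f (s k ^ m) = semicircleMoment 1 m) {v : n → n → J → ℂ}
    (hv : ∀ i j p q, v i j ⬝ᵥ v p q = if p = j ∧ q = i then 1 else 0) {S : Matrix n n T}
    (hS : ∀ i j, S i j = ∑ k, v i j k • s k) :
    SchwingerDyson (matrixState n f) S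
      (Sum.elim (fun _ : Unit => S) ((↑) : {X : Matrix n n T | ∀ i j, X i j ∈ B} → _))
      (Sum.elim (fun _ => (Fintype.card n : ℂ)) 0) := by
  let e : Unit ⊕ {X : Matrix n n T | ∀ i j, X i j ∈ B} → Matrix n n (FreeAlgebra ℂ (J ⊕ B)) :=
    Sum.elim (fun _ => .of fun p q => ∑ k, v p q k • FreeAlgebra.ι ℂ (.inl k))
      fun X => .of fun p q => FreeAlgebra.ι ℂ (.inr ⟨X.1 p q, X.2 p q⟩)
  have hval : evalMatrix (Sum.elim s ((↑) : B → T)) e = Sum.elim (fun _ => S) (↑) := by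
    ext (_ | X) p q <;> simp [evalMatrix, e, hS]
  have hdirection : Sum.elim (fun _ => (Fintype.card n : ℂ)) 0 =
      (Fintype.card n : ℂ) • Sum.elim (fun _ : Unit => 1)
        (0 : {X : Matrix n n T | ∀ i j, X i j ∈ B} → ℂ) := by
    ext (_ | X) <;> simp
  rw [← hval, hdirection]
  refine SchwingerDyson.matrix (c := fun i j => Sum.elim (v i j) 0)
    (fun i j => hS i j ▸ schwingerDyson_sum_smul_of_areFree f1 hfree hs (v i j)) ?_
  rintro i j p q (_ | X)
  · have hdot : freeDiff (Sum.elim s (↑)) (Sum.elim (v i j) (0 : B → ℂ)) (e (.inl ()) p q) =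
        (v i j ⬝ᵥ v p q) • 1 := by
      simp [e, dotProduct, Finset.sum_smul, smul_smul, mul_comm]
    rw [hdot, hv]
    rcases eq_or_ne p j with rfl | hp <;> rcases eq_or_ne i q with rfl | hq <;>
      simp [Algebra.TensorProduct.one_def, *, Ne.symm]
  · simp [e]

end SemicircularMatrix

lemma AreFree.comp_injective {T ι ι' : Type*} [Ring T] [Algebra ℂ T] {φ : T → ℂ} {X : ι → Set T}
    (h : AreFree φ X) {g : ι' → ι} (hg : g.Injective) : AreFree φ (X ∘ g) :=
  fun n t z hz hφz ht => h n (g ∘ t) z hz hφz fun m => hg.ne (ht m)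

lemma SemicircMoments.map_pow_eq {T : Type*} [Monoid T] {φ : T → ℂ} {s : T}
    (hs : SemicircMoments φ s) (n : ℕ) : φ (s ^ n) = semicircleMoment 1 n := by
  rcases Nat.even_or_odd' n with ⟨m, rfl | rfl⟩
  · simp [(hs m).1, semicircleMoment_two_mul]
  · rw [(hs m).2, semicircleMoment_of_odd 1 ⟨m, rfl⟩]

section HermitianMatrix

variable {n : Type*} [LinearOrder n]

/-- The semicirculars `sd i`, `x i j`, `y i j` (`i < j`) arranged in one family indexed by pairs:
`x` above the diagonal, `sd` on it, and `y`, transposed, below it. -/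
def hermitianFamily {T : Type*} (sd : n → T) (x y : n → n → T) (q : n × n) : T :=
  if q.1 < q.2 then x q.1 q.2 else if q.1 = q.2 then sd q.1 else y q.2 q.1

/-- The coordinates of the `(i, j)` entry of the Hermitian matrix in `hermitianFamily`: that entry
is a combination of the members `(i, j)` and `(j, i)` of the family. -/
def hermitianCoeff (i j : n) : n × n → ℂ :=
  if i < j then (√2 : ℂ)⁻¹ • (Pi.single (i, j) 1 + Complex.I • Pi.single (j, i) 1)
  else if i = j then Pi.single (i, i) 1
  else (√2 : ℂ)⁻¹ • (Pi.single (j, i) 1 - Complex.I • Pi.single (i, j) 1)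

/-- The position of the members of `hermitianFamily` among diagonal, `x` and `y` semicirculars. -/
def hermitianIndex (q : n × n) :
    n ⊕ {q : n × n // q.1 < q.2} ⊕ {q : n × n // q.1 < q.2} ⊕ Unit :=
  if h : q.1 < q.2 then .inr (.inl ⟨q, h⟩)
  else if h' : q.1 = q.2 then .inl q.1
  else .inr (.inr (.inl ⟨q.swap, lt_of_le_of_ne (not_lt.mp h) (Ne.symm h')⟩))

lemma hermitianIndex_injective : Function.Injective (hermitianIndex (n := n)) := by
  rintro ⟨i, j⟩ ⟨p, q⟩ h
  simp only [hermitianIndex] at h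
  split_ifs at h <;> simp_all

lemma sum_hermitianCoeff_smul [Fintype n] {T : Type*} [Ring T] [Algebra ℂ T] (s : n × n → T)
    (i j : n) : ∑ q, hermitianCoeff i j q • s q =
      if i < j then (√2 : ℂ)⁻¹ • (s (i, j) + Complex.I • s (j, i))
      else if i = j then s (i, i)
      else (√2 : ℂ)⁻¹ • (s (j, i) - Complex.I • s (i, j)) := by
  unfold hermitianCoeff
  split_ifs <;> simp [add_smul, sub_smul, smul_add, smul_sub, mul_smul, Finset.sum_add_distrib,
    Finset.sum_sub_distrib, Pi.single_apply]

lemma hermitianCoeff_dotProduct [Fintype n] (i j p q : n) :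
    hermitianCoeff i j ⬝ᵥ hermitianCoeff p q = if p = j ∧ q = i then 1 else 0 := by
  have hsqrt : (√2 : ℂ)⁻¹ * (√2 : ℂ)⁻¹ = 2⁻¹ := by
    rw [← mul_inv, ← Complex.ofReal_mul, Real.mul_self_sqrt zero_le_two, Complex.ofReal_ofNat]
  have hdot := sum_hermitianCoeff_smul (hermitianCoeff p q) i j
  simp only [smul_eq_mul] at hdot
  rw [dotProduct, hdot]
  simp only [hermitianCoeff]
  split_ifs <;>
    simp only [Pi.smul_apply, Pi.add_apply, Pi.sub_apply, Pi.single_apply, smul_eq_mul,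
      Prod.mk.injEq] <;>
    grind [Complex.I_mul_I]

end HermitianMatrix

lemma AreFree.sumElim_hermitianFamily {n T : Type*} [LinearOrder n] [Ring T] [Algebra ℂ T]
    {φ : T → ℂ} {sd : n → T} {x y : n → n → T} {B : Set T}
    (hfree : AreFree φ
      (Sum.elim (fun i => ({sd i} : Set T))
        (Sum.elim (fun q : {q : n × n // q.1 < q.2} => ({x q.1.1 q.1.2} : Set T))
          (Sum.elim (fun q : {q : n × n // q.1 < q.2} => ({y q.1.1 q.1.2} : Set T))
            (fun _ : Unit => B))))) :
    AreFree φ (Sum.elim (fun q => {hermitianFamily sd x y q}) fun _ : Unit => B) := by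
  have hindex : Function.Injective
      (Sum.elim hermitianIndex fun u : Unit =>
        (.inr (.inr (.inr u)) : n ⊕ {q : n × n // q.1 < q.2} ⊕ {q : n × n // q.1 < q.2} ⊕ Unit)) :=
    hermitianIndex_injective.sumElim (fun _ _ _ => rfl) fun q _ => by
      unfold hermitianIndex
      split_ifs <;> simp
  convert hfree.comp_injective hindex using 1
  ext (q | u) : 1
  · simp only [hermitianFamily, hermitianIndex, Function.comp_apply, Sum.elim_inl]
    split_ifs <;> rfl
  · rfl

lemma star_circ {x y : A} (hx : star x = x) (hy : star y = y) :
    star (circ x y) = (√2 : ℂ)⁻¹ • (x - Complex.I • y) := by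
  simp [circ, hx, hy, sub_eq_add_neg]

lemma ite_circ_eq_sum_hermitianCoeff_smul {n : Type*} [LinearOrder n] [Fintype n] (sd : n → A)
    {x y : n → n → A} (hx : ∀ i j, i < j → star (x i j) = x i j)
    (hy : ∀ i j, i < j → star (y i j) = y i j) (i j : n) :
    (if i < j then circ (x i j) (y i j) else if i = j then sd i
      else star (circ (x j i) (y j i))) =
      ∑ q, hermitianCoeff i j q • hermitianFamily sd x y q := by
  rw [sum_hermitianCoeff_smul]
  rcases lt_trichotomy i j with hij | rfl | hij
  · simp [hij, hij.not_gt, hij.ne', hermitianFamily, circ]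
  · simp [hermitianFamily]
  · simp [hij, hij.not_gt, hij.ne', hermitianFamily, star_circ (hx _ _ hij) (hy _ _ hij)]

lemma phid_eq_matrixState {T : Type*} [Ring T] [Algebra ℂ T] {d : ℕ} (φ : T →ₗ[ℂ] ℂ) :
    (phid φ : Matrix (Fin d) (Fin d) T → ℂ) = matrixState (Fin d) φ := by
  ext X
  simp [phid, matrixState_apply, div_eq_inv_mul]

theorem selfadjoint_matrix_of_semicirculars_is_semicircular_and_free_general
    {d : ℕ} (hd : 0 < d) {φ : A →ₗ[ℂ] ℂ} (hφ1 : φ 1 = 1)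
    (hφtr : ∀ x y : A, φ (x * y) = φ (y * x)) {B : Set A}
    {sd : Fin d → A} {x y : Fin d → Fin d → A}
    (hsd_sc : ∀ i, SemicircMoments (fun z => φ z) (sd i))
    (hx_sa : ∀ i j, i < j → star (x i j) = x i j)
    (hx_sc : ∀ i j, i < j → SemicircMoments (fun z => φ z) (x i j))
    (hy_sa : ∀ i j, i < j → star (y i j) = y i j)
    (hy_sc : ∀ i j, i < j → SemicircMoments (fun z => φ z) (y i j))
    (hfree : AreFree (fun z => φ z)
      (Sum.elim (fun i : Fin d => ({sd i} : Set A))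
        (Sum.elim (fun q : {q : Fin d × Fin d // q.1 < q.2} => ({x q.1.1 q.1.2} : Set A))
          (Sum.elim (fun q : {q : Fin d × Fin d // q.1 < q.2} => ({y q.1.1 q.1.2} : Set A))
            (fun _ : Unit => B))))) :
    let S : Matrix (Fin d) (Fin d) A := Matrix.of fun i j =>
      if i < j then circ (x i j) (y i j)
      else if i = j then sd i
      else star (circ (x j i) (y j i))
    (∀ m : ℕ, phid φ (S ^ (2 * m)) = (d : ℂ) ^ m * catalan m ∧
      phid φ (S ^ (2 * m + 1)) = 0) ∧
    AreFree (fun X => phid φ X)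
      (![{S}, {X : Matrix (Fin d) (Fin d) A | ∀ i j, X i j ∈ B}] :
        Fin 2 → Set (Matrix (Fin d) (Fin d) A)) := by
  intro S
  have : Nonempty (Fin d) := ⟨⟨0, hd⟩⟩
  have hs (q : Fin d × Fin d) (m : ℕ) :
      φ (hermitianFamily sd x y q ^ m) = semicircleMoment 1 m := by
    rcases lt_trichotomy q.1 q.2 with hq | hq | hq
    · simpa [hermitianFamily, hq] using (hx_sc _ _ hq).map_pow_eq m
    · simpa [hermitianFamily, hq] using (hsd_sc q.2).map_pow_eq m
    · simpa [hermitianFamily, hq.not_gt, hq.ne'] using (hy_sc _ _ hq).map_pow_eq m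
  have hSD := schwingerDyson_matrix_of_areFree hφ1 hfree.sumElim_hermitianFamily hs
    hermitianCoeff_dotProduct (S := S) (ite_circ_eq_sum_hermitianCoeff_smul sd hx_sa hy_sa)
  have hmoment (k : ℕ) : phid φ (S ^ k) = semicircleMoment d k := by
    simpa [phid_eq_matrixState] using
      hSD.map_letter_pow (val := Sum.elim (fun _ : Unit => S) _) (a := .inl ())
        (matrixState_one hφ1) k
  refine ⟨fun m => ⟨?_, ?_⟩, ?_⟩
  · rw [hmoment, semicircleMoment_two_mul]
  · rw [hmoment, semicircleMoment_of_odd _ ⟨m, rfl⟩]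
  · rw [phid_eq_matrixState]
    exact hSD.areFree (matrixState_one hφ1) (matrixState_mul_comm hφtr)

/-- Proposition 5.3, 2°: a self-adjoint matrix with free semicircular diagonal entries and
free circular off-diagonal entries, everything free from `ℬ`, is semicircular of variance
`d` and free from `M_d(ℬ)`. -/
theorem selfadjoint_matrix_of_semicirculars_is_semicircular_and_free
    {d : ℕ} (hd : 0 < d)
    (φ : A →ₗ[ℂ] ℂ)
    (hφ1 : φ 1 = 1)
    (hφpos : ∀ x : A, 0 ≤ φ (star x * x))
    (hφtr : ∀ x y : A, φ (x * y) = φ (y * x))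
    (B : StarSubalgebra ℂ A)
    (sd : Fin d → A) (x y : Fin d → Fin d → A)
    (hsd_sa : ∀ i, star (sd i) = sd i)
    (hsd_sc : ∀ i, SemicircMoments (fun z => φ z) (sd i))
    (hx_sa : ∀ i j, i < j → star (x i j) = x i j)
    (hx_sc : ∀ i j, i < j → SemicircMoments (fun z => φ z) (x i j))
    (hy_sa : ∀ i j, i < j → star (y i j) = y i j)
    (hy_sc : ∀ i j, i < j → SemicircMoments (fun z => φ z) (y i j))
    (hfree : AreFree (fun z => φ z)
      (Sum.elim (fun i : Fin d => ({sd i} : Set A))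
        (Sum.elim (fun q : {q : Fin d × Fin d // q.1 < q.2} => ({x q.1.1 q.1.2} : Set A))
          (Sum.elim (fun q : {q : Fin d × Fin d // q.1 < q.2} => ({y q.1.1 q.1.2} : Set A))
            (fun _ : Unit => (B : Set A)))))) :
    let S : Matrix (Fin d) (Fin d) A := Matrix.of fun i j =>
      if i < j then circ (x i j) (y i j)
      else if i = j then sd i
      else star (circ (x j i) (y j i))
    (∀ m : ℕ, phid φ (S ^ (2 * m)) = (d : ℂ) ^ m * catalan m ∧
      phid φ (S ^ (2 * m + 1)) = 0) ∧
    AreFree (fun X => phid φ X)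
      (![{S}, {X : Matrix (Fin d) (Fin d) A | ∀ i j, X i j ∈ B}] :
        Fin 2 → Set (Matrix (Fin d) (Fin d) A)) :=
  selfadjoint_matrix_of_semicirculars_is_semicircular_and_free_general hd hφ1 hφtr hsd_sc
    hx_sa hx_sc hy_sa hy_sc hfree
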